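/- For every non-trivial graph class 𝒢 that is closed under taking topological minors there is a constant d ∈ (0,1) such that the following holds: if a graph G ∈ 𝒢 has a path of order n, then G has an induced path of order at least (log₂ n)^d. -/

import Mathlib

open SimpleGraph Real

/-- `G` has a (not necessarily induced) path on `n` vertices. -/
def HasPathOfOrder {V : Type*} (G : SimpleGraph V) (n : ℕ) : Prop :=
  ∃ (u v : V) (p : G.Walk u v), p.IsPath ∧ p.length + 1 = n

/-- `G` has a Hamiltonian path. -/
def HasHamPath {V : Type*} (G : SimpleGraph V) : Prop :=
  ∃ (u v : V) (p : G.Walk u v), p.IsPath ∧ ∀ w, w ∈ p.support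

/-- `G` has an induced path on at least `r` vertices (an induced subgraph isomorphic to a
path graph on `m ≥ r` vertices). -/
def HasInducedPathGE {V : Type*} (G : SimpleGraph V) (r : ℝ) : Prop :=
  ∃ m : ℕ, r ≤ (m : ℝ) ∧ Nonempty (pathGraph m ↪g G)

/-- A tree (or path) representation of `G` over the graph `T`: every vertex `v` of `G` has a
nonempty connected model `model v ⊆ V(T)`, and models of adjacent vertices intersect. -/
structure TreeRep {V N : Type*} (G : SimpleGraph V) (T : SimpleGraph N) where
  model : V → Set N
  model_connected : ∀ v, (T.induce (model v)).Connected
  adj_meet : ∀ ⦃u v⦄, G.Adj u v → (model u ∩ model v).Nonempty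

namespace TreeRep

variable {V N : Type*} {G : SimpleGraph V} {T : SimpleGraph N}

/-- The bag of the representation at a node `t`. -/
def bag (R : TreeRep G T) (t : N) : Set V := {v | t ∈ R.model v}

/-- The representation has width less than `k`, i.e. all bags have at most `k` vertices. -/
def WidthLT (R : TreeRep G T) (k : ℕ) : Prop := ∀ t, (R.bag t).ncard ≤ k

/-- The representation has width at most `k`, i.e. all bags have at most `k + 1` vertices. -/
def WidthLE (R : TreeRep G T) (k : ℕ) : Prop := ∀ t, (R.bag t).ncard ≤ k + 1

/-- The weight of a path `p` of `T`: the number of vertices of `G` whose model meets `p`. -/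
noncomputable def pathWeight (R : TreeRep G T) {x y : N} (p : T.Walk x y) : ℕ :=
  {v : V | ∃ t ∈ p.support, t ∈ R.model v}.ncard

/-- A representation is varied if no bag is contained in the bag at a neighboring node. -/
def Varied (R : TreeRep G T) : Prop := ∀ ⦃t t'⦄, T.Adj t t' → ¬ R.bag t ⊆ R.bag t'

/-- The representation has adhesion less than `a`: the adhesion set of every edge of `T`
has fewer than `a` vertices. -/
def AdhesionLT (R : TreeRep G T) (a : ℕ) : Prop :=
  ∀ ⦃t t'⦄, T.Adj t t' → (R.bag t ∩ R.bag t').ncard < a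

/-- The torso of the representation at a node `t`: the subgraph induced on the bag at `t`
together with all edges inside adhesion sets of edges of `T` incident to `t`. -/
def torso (R : TreeRep G T) (t : N) : SimpleGraph (R.bag t) :=
  SimpleGraph.fromRel (fun u v =>
    G.Adj u v ∨ ∃ t', T.Adj t t' ∧ (u : V) ∈ R.bag t' ∧ (v : V) ∈ R.bag t')

end TreeRep

/-- `G` has pathwidth less than `k`: it has a representation over a path all of whose bags
have at most `k` vertices. -/
def PathwidthLT {V : Type*} (G : SimpleGraph V) (k : ℕ) : Prop :=
  ∃ (m : ℕ) (R : TreeRep G (pathGraph (m + 1))), R.WidthLT k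

/-- `G` has treewidth less than `k`: it has a representation over a tree all of whose bags
have at most `k` vertices. -/
def TreewidthLT {V : Type*} (G : SimpleGraph V) (k : ℕ) : Prop :=
  ∃ (N : Type) (_ : Fintype N) (T : SimpleGraph N), T.IsTree ∧
    ∃ R : TreeRep G T, R.WidthLT k

/-- `G` has treewidth at most `k`. -/
def TreewidthLE {V : Type*} (G : SimpleGraph V) (k : ℕ) : Prop :=
  ∃ (N : Type) (_ : Fintype N) (T : SimpleGraph N), T.IsTree ∧
    ∃ R : TreeRep G T, R.WidthLE k

/-- A leaf of a graph: a vertex with at most one neighbor. -/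
def IsLeafNode {N : Type*} (T : SimpleGraph N) (l : N) : Prop :=
  (T.neighborSet l).Subsingleton

/-- `H` is obtained from `G` by a sequence of edge contractions: there is a surjection
from `V(G)` onto `V(H)` with connected fibers inducing the adjacency of `H`. -/
def IsContraction {W V : Type*} (H : SimpleGraph W) (G : SimpleGraph V) : Prop :=
  ∃ f : V → W, Function.Surjective f ∧
    (∀ w : W, (G.induce (f ⁻¹' {w})).Connected) ∧
    (∀ x y : W, H.Adj x y ↔ x ≠ y ∧ ∃ u v : V, f u = x ∧ f v = y ∧ G.Adj u v)

/-- `G` is an interval graph: the intersection graph of a family of real intervals. -/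
def IsIntervalGraph {V : Type*} (G : SimpleGraph V) : Prop :=
  ∃ l r : V → ℝ, (∀ v, l v ≤ r v) ∧
    ∀ u v : V, G.Adj u v ↔ u ≠ v ∧ max (l u) (l v) ≤ min (r u) (r v)

/-- The internal vertices of a walk: vertices of the walk distinct from its two endpoints. -/
def WalkInternal {V : Type*} {G : SimpleGraph V} {x y : V} (p : G.Walk x y) : Set V :=
  {w | w ∈ p.support ∧ w ≠ x ∧ w ≠ y}

/-- `H` is a topological minor of `G`: there are branch vertices `φ u` for `u ∈ V(H)` and
internally disjoint paths of `G` joining them, one for each edge of `H`. -/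
def IsTopMinor {W V : Type*} (H : SimpleGraph W) (G : SimpleGraph V) : Prop :=
  ∃ (φ : W ↪ V) (P : ∀ ⦃u v : W⦄, H.Adj u v → G.Walk (φ u) (φ v)),
    (∀ ⦃u v⦄ (h : H.Adj u v), (P h).IsPath) ∧
    (∀ ⦃u v⦄ (h : H.Adj u v), P h.symm = (P h).reverse) ∧
    (∀ ⦃u v⦄ (h : H.Adj u v), ∀ w ∈ WalkInternal (P h), w ∉ Set.range φ) ∧
    (∀ ⦃u v u' v'⦄ (h : H.Adj u v) (h' : H.Adj u' v'), s(u, v) ≠ s(u', v') →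
      ∀ w ∈ WalkInternal (P h), w ∉ WalkInternal (P h'))

/-- `H` is (an isomorphic copy of) a subgraph of `G`. -/
def ContainsSubgraphCopy {A B : Type*} (H : SimpleGraph A) (G : SimpleGraph B) : Prop :=
  ∃ f : A ↪ B, ∀ u v : A, H.Adj u v → G.Adj (f u) (f v)

/-- `G` is `k`-degenerate: every (induced) subgraph has a vertex of degree at most `k`. -/
def Degenerate {V : Type*} (G : SimpleGraph V) (k : ℕ) : Prop :=
  ∀ s : Set V, s.Nonempty → ∃ v ∈ s, {w | w ∈ s ∧ G.Adj v w}.ncard ≤ k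

/-- The cycle on `ZMod m` (for `m ≥ 3` this is the cycle graph on `m` vertices). -/
def ringGraph (m : ℕ) : SimpleGraph (ZMod m) :=
  SimpleGraph.fromRel (fun i j => j = i + 1)

/-- Cliquewidth expressions with labels in `Fin k`. -/
inductive CWExpr (k : ℕ) where
  | vertex (l : Fin k) : CWExpr k
  | union (e₁ e₂ : CWExpr k) : CWExpr k
  | addEdges (i j : Fin k) (hij : i ≠ j) (e : CWExpr k) : CWExpr k
  | relabel (f : Fin k → Fin k) (e : CWExpr k) : CWExpr k

namespace CWExpr

variable {k : ℕ}

/-- The vertex set of the graph described by a cliquewidth expression. -/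
def verts : CWExpr k → Type
  | vertex _ => Unit
  | union e₁ e₂ => e₁.verts ⊕ e₂.verts
  | addEdges _ _ _ e => e.verts
  | relabel _ e => e.verts

/-- The labelling of the vertices described by a cliquewidth expression. -/
def label : (e : CWExpr k) → e.verts → Fin k
  | vertex l, _ => l
  | union e₁ _, Sum.inl x => e₁.label x
  | union _ e₂, Sum.inr x => e₂.label x
  | addEdges _ _ _ e, x => e.label x
  | relabel f e, x => f (e.label x)

/-- The adjacency relation described by a cliquewidth expression. -/
def adj : (e : CWExpr k) → e.verts → e.verts → Prop
  | vertex _, _, _ => False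
  | union e₁ _, Sum.inl x, Sum.inl y => e₁.adj x y
  | union _ e₂, Sum.inr x, Sum.inr y => e₂.adj x y
  | union _ _, _, _ => False
  | addEdges i j _ e, x, y =>
      e.adj x y ∨ (e.label x = i ∧ e.label y = j) ∨ (e.label x = j ∧ e.label y = i)
  | relabel _ e, x, y => e.adj x y

/-- The graph described by a cliquewidth expression. -/
def graph (e : CWExpr k) : SimpleGraph e.verts := SimpleGraph.fromRel e.adj

end CWExpr

/-- `G` has cliquewidth at most `k`: it is isomorphic to the graph of a cliquewidth
expression with at most `k` labels. -/
def CliquewidthLE {V : Type*} (G : SimpleGraph V) (k : ℕ) : Prop :=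
  ∃ e : CWExpr k, Nonempty (G ≃g e.graph)

/-- `G` has `(k, Δ)`-almost bounded degree: removing at most `k` vertices yields a graph of
maximum degree at most `Δ`. -/
def AlmostBoundedDegree {V : Type*} (G : SimpleGraph V) (k Δ : ℕ) : Prop :=
  ∃ X : Set V, X.ncard ≤ k ∧ ∀ v ∉ X, {w | w ∉ X ∧ G.Adj v w}.ncard ≤ Δ

/-- An embedding scheme for `H`: a rotation system (a permutation of the darts that is,
around each vertex, a single cycle on the darts leaving that vertex) together with a
signature on the edges. -/
structure EmbScheme {W : Type*} (H : SimpleGraph W) where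
  rot : Equiv.Perm H.Dart
  rot_fst : ∀ d : H.Dart, (rot d).fst = d.fst
  rot_cyclic : ∀ d d' : H.Dart, d.fst = d'.fst → ∃ n : ℕ, (rot ^ n) d = d'
  sign : Sym2 W → Bool

namespace EmbScheme

variable {W : Type*} {H : SimpleGraph W}

/-- The face-tracing step of an embedding scheme, acting on darts with a direction. -/
def faceStep (S : EmbScheme H) : H.Dart × Bool → H.Dart × Bool :=
  fun p =>
    let s' := xor p.2 (S.sign p.1.edge)
    ((if s' then S.rot.symm p.1.symm else S.rot p.1.symm), s')

/-- The number of orbits of a function. -/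
noncomputable def orbitCount {α : Type*} (f : α → α) : ℕ :=
  Nat.card (Quotient (Relation.EqvGen.setoid (fun x y => f x = y)))

/-- The scheme describes an embedding of `H` in a surface of Euler genus at most `g`.
Isolated vertices each bound one face; every other face is traced twice by `faceStep`,
so the number of faces is `orbitCount (faceStep) / 2` plus the number of isolated
vertices, and the Euler genus of the embedding is `2c - |V| + |E| - F`. -/
def GenusLE (S : EmbScheme H) (g : ℕ) : Prop :=
  2 * Nat.card H.ConnectedComponent + Nat.card H.edgeSet ≤
    g + Nat.card W +
      (orbitCount S.faceStep / 2 + Nat.card {v : W | ∀ w, ¬ H.Adj v w})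

/-- The cycle `e 0, e 1, …, e (m-1)` is a facial cycle of the embedding scheme `S`:
its consecutive darts are consecutive in a face traversal. -/
def IsFacialCycle (S : EmbScheme H) {m : ℕ} (e : ZMod m → W)
    (hadj : ∀ x : ZMod m, H.Adj (e x) (e (x + 1))) : Prop :=
  ∃ b : ZMod m → Bool, ∀ x : ZMod m,
    S.faceStep (⟨(e x, e (x + 1)), hadj x⟩, b x) =
      (⟨(e (x + 1), e (x + 1 + 1)), hadj (x + 1)⟩, b (x + 1))

end EmbScheme

/-- `Hs` has a `C`-vortex of width less than `k`, where `C` is the cycle of `G₀` given by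
`e`: the vertices common to `Hs` and `G₀` are exactly those of `C`, and `Hs` has a cycle
representation over `C` in which the model of each vertex of `C` contains that vertex and
every bag has at most `k` vertices. -/
def IsVortex {V : Type*} {G : SimpleGraph V} (Hs G₀ : G.Subgraph) {m : ℕ}
    (e : ZMod m → G₀.verts) (k : ℕ) : Prop :=
  Hs.verts ∩ G₀.verts = Subtype.val '' Set.range e ∧
  ∃ model : Hs.verts → Set (ZMod m),
    (∀ v, ((ringGraph m).induce (model v)).Connected) ∧
    (∀ (x : ZMod m) (v : Hs.verts), (e x : V) = (v : V) → x ∈ model v) ∧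
    (∀ ⦃u v⦄, Hs.coe.Adj u v → (model u ∩ model v).Nonempty) ∧
    (∀ t : ZMod m, {v : Hs.verts | t ∈ model v}.ncard ≤ k)

/-- `G` is `(g, p, a, k)`-almost-embeddable. -/
def AlmostEmbeddable {V : Type*} (G : SimpleGraph V) (g p a k : ℕ) : Prop :=
  ∃ A : Set V, A.ncard ≤ a ∧
  ∃ s : ℕ, s ≤ p ∧
  ∃ (G₀ : G.Subgraph) (Gv : Fin s → G.Subgraph),
    (G₀ ⊔ ⨆ i, Gv i) = (⊤ : G.Subgraph).deleteVerts A ∧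
    (∀ i j, i ≠ j → Disjoint (Gv i).verts (Gv j).verts) ∧
    ∃ S : EmbScheme G₀.coe, S.GenusLE g ∧
    ∃ (m : Fin s → ℕ) (e : ∀ i, ZMod (m i) → G₀.verts)
      (hadj : ∀ i x, G₀.coe.Adj (e i x) (e i (x + 1))),
      (∀ i, 3 ≤ m i) ∧
      (∀ i, Function.Injective (e i)) ∧
      (∀ i, S.IsFacialCycle (e i) (hadj i)) ∧
      (∀ i j, i ≠ j → Disjoint (Set.range (e i)) (Set.range (e j))) ∧
      (∀ i, IsVortex (Gv i) G₀ (e i) k)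

/-!
Suppose the vertices of `G` on a long path are numbered `0, …, m - 1`. Walk greedily from the left
end of an interval: whenever the neighbourhood of the current vertex `w` avoids a window that is
long compared with the rest of the interval, continue from the last neighbour of `w` before that
window and forget everything beyond the window. The vertices visited form an induced path. So, if
there is no induced path of order `k + 1`, within `k + 1` moves some vertex has neighbours in all
long windows of a still long interval. Iterating inside that interval yields `t` vertices whose
neighbourhoods are all dense, at one scale `g`, in an interval with room for one window of length
`g` for each pair of them. Each window is connected and links its pair, so every graph on `t`
vertices is a topological minor. Each of the `t` rounds raises the required length to a power
linear in `k`, so `log m` is at most polynomial in `k` when some graph on `t` vertices is not a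
topological minor.
-/

section InducedPath

variable {V : Type*} {G : SimpleGraph V}

/-- The induced path of order one at `v`. -/
def singletonInducedPath (G : SimpleGraph V) (v : V) : pathGraph 1 ↪g G where
  toFun _ := v
  inj' := Function.injective_of_subsingleton _
  map_rel_iff' := by simp [Subsingleton.elim _ (0 : Fin 1)]

/-- The induced path obtained from the induced path `f` by adding a new first vertex `v`, whose
only neighbour on `f` is the first vertex of `f`. -/
def consInducedPath {n : ℕ} (f : pathGraph (n + 1) ↪g G) (v : V) (hv : ∀ i, f i ≠ v)
    (hadj : ∀ i, G.Adj v (f i) ↔ i = 0) : pathGraph (n + 2) ↪g G where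
  toFun := Fin.cons v f
  inj' := Fin.cons_injective_iff.2 ⟨fun ⟨i, hi⟩ => hv i hi, f.injective⟩
  map_rel_iff' {i j} := by
    change G.Adj ((Fin.cons v f : Fin (n + 2) → V) i) ((Fin.cons v f : Fin (n + 2) → V) j) ↔ _
    rw [pathGraph_adj]
    cases i using Fin.cases <;> cases j using Fin.cases
    · simp
    · simp only [Fin.cons_zero, Fin.cons_succ, hadj, Fin.ext_iff, Fin.val_zero, Fin.val_succ]
      omega
    · simp only [Fin.cons_zero, Fin.cons_succ, G.adj_comm _ v, hadj, Fin.ext_iff, Fin.val_zero,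
        Fin.val_succ]
      omega
    · simp only [Fin.cons_succ, f.map_adj_iff, pathGraph_adj, Fin.val_succ]
      omega

end InducedPath

section Density

variable {H : SimpleGraph ℕ}

/-- The neighbourhood of `w` meets every window `[x, x + g)` contained in `[a, b)`: a notion of
density of the neighbourhood in `[a, b)` at the scale `g`. -/
def MeetsWindows (H : SimpleGraph ℕ) (w a b g : ℕ) : Prop :=
  ∀ x, a ≤ x → x + g ≤ b → ∃ z ∈ Set.Ico x (x + g), H.Adj w z

theorem MeetsWindows.mono {w a b g a' b' g' : ℕ} (h : MeetsWindows H w a b g) (ha : a ≤ a')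
    (hb : b' ≤ b) (hg : g ≤ g') : MeetsWindows H w a' b' g' := by
  intro x hax hxb
  obtain ⟨z, hz, hadj⟩ := h x (by omega) (by omega)
  exact ⟨z, Set.Ico_subset_Ico_right (by omega) hz, hadj⟩

theorem exists_last_of_forall_not {P : ℕ → Prop} {n x y : ℕ} (hn : P n) (hny : n < y)
    (hP : ∀ z ∈ Set.Ico x y, ¬ P z) :
    ∃ l, n ≤ l ∧ l < x ∧ P l ∧ ∀ z ∈ Set.Ioo l y, ¬ P z := by
  classical
  have hPl : P (Nat.findGreatest P (y - 1)) := Nat.findGreatest_spec (by omega) hn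
  have hle : Nat.findGreatest P (y - 1) ≤ y - 1 := Nat.findGreatest_le _
  refine ⟨_, Nat.le_findGreatest (by omega) hn, ?_, hPl, fun z hz => ?_⟩
  · by_contra! hx
    exact hP _ ⟨hx, by omega⟩ hPl
  · exact Nat.findGreatest_is_greatest hz.1 (by have := hz.2; omega)

theorem exists_inducedPath_cons {k a l y : ℕ} (hal : a < l) (hadj : H.Adj a l)
    (hlast : ∀ z ∈ Set.Ioo l y, ¬ H.Adj a z) (f : pathGraph (k + 1) ↪g H) (hf0 : f 0 = l)
    (hf : ∀ i, f i ∈ Set.Ico l y) :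
    ∃ f' : pathGraph (k + 2) ↪g H, f' 0 = a ∧ ∀ i, f' i ∈ Set.Ico a y := by
  have hnew : ∀ i, f i ≠ a := fun i => (hal.trans_le (hf i).1).ne'
  have honly : ∀ i, H.Adj a (f i) ↔ i = 0 := by
    refine fun i => ⟨fun hai => ?_, fun hi => by rwa [hi, hf0]⟩
    by_contra hi
    have hne : l ≠ f i := hf0 ▸ f.injective.ne (Ne.symm hi)
    exact hlast _ ⟨(hf i).1.lt_of_ne hne, (hf i).2⟩ hai
  refine ⟨consInducedPath f a hnew honly, rfl, Fin.cases ?_ fun i => ?_⟩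
  · exact ⟨le_rfl, hal.trans_le ((hf 0).1.trans (hf 0).2.le)⟩
  · exact Set.Ico_subset_Ico_left hal.le (hf i)

theorem exists_meetsWindows_or_inducedPath {M E : ℕ} (hM : 0 < M) (hE : 0 < E) (k : ℕ)
    {a b : ℕ} (hpath : ∀ i, a ≤ i → i + 1 < b → H.Adj i (i + 1)) (hab : a + M * E ^ k ≤ b) :
    (∃ w c, a ≤ w ∧ c ≤ b ∧ w + M ≤ c ∧
        ∀ g, c ≤ w + E * g → MeetsWindows H w (w + 1) c g) ∨
      ∃ f : pathGraph (k + 1) ↪g H, f 0 = a ∧ ∀ i, f i ∈ Set.Ico a b := by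
  induction k generalizing a b with
  | zero =>
    rw [pow_zero, mul_one] at hab
    exact .inr ⟨singletonInducedPath H a, rfl, fun _ => ⟨le_rfl, by change a < b; omega⟩⟩
  | succ k ih =>
    have hME : M ≤ M * E ^ (k + 1) := Nat.le_mul_of_pos_right _ (by positivity)
    by_cases hdense : ∀ g, b ≤ a + E * g → MeetsWindows H a (a + 1) b g
    · exact .inl ⟨a, b, le_rfl, le_rfl, by omega, hdense⟩
    simp only [MeetsWindows, not_forall] at hdense
    obtain ⟨g, hbg, x, hax, hxb, hgap⟩ := hdense
    have hg : M * E ^ k ≤ g := by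
      refine Nat.le_of_mul_le_mul_left (?_ : E * _ ≤ E * g) hE
      calc E * (M * E ^ k) = M * E ^ (k + 1) := by ring
        _ ≤ E * g := by omega
    have hg0 : 0 < g := lt_of_lt_of_le (by positivity) hg
    obtain ⟨l, hal, hlx, hadj, hlast⟩ :=
      exists_last_of_forall_not (P := H.Adj a) (hpath a le_rfl (by omega)) (y := x + g)
        (by omega) fun z hz hz' => hgap ⟨z, hz, hz'⟩
    rcases ih (a := l) (b := x + g) (fun i hi hi' => hpath i (by omega) (by omega)) (by omega) with
      ⟨w, c, haw, hcb, hwc, hmeets⟩ | ⟨f, hf0, hf⟩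
    · exact .inl ⟨w, c, by omega, by omega, hwc, hmeets⟩
    · obtain ⟨f', hf'0, hf'⟩ := exists_inducedPath_cons (by omega) hadj hlast f hf0 hf
      exact .inr ⟨f', hf'0, fun i => Set.Ico_subset_Ico_right hxb (hf' i)⟩

/-- There are `s` vertices to the left of an interval `[a, b)` with `b ≤ m`, all of whose
neighbourhoods are dense in `[a, b)` at a common scale `g`, where `[a, b)` has room for `D`
disjoint windows of length `g`. -/
def HasDenseSet (H : SimpleGraph ℕ) (m s D : ℕ) : Prop :=
  ∃ (A : Finset ℕ) (a b g : ℕ), A.card = s ∧ 0 < g ∧ a + g * D ≤ b ∧ b ≤ m ∧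
    ∀ w ∈ A, w < a ∧ MeetsWindows H w a b g

theorem HasDenseSet.mono {m s D D' : ℕ} (h : HasDenseSet H m s D) (hD : D' ≤ D) :
    HasDenseSet H m s D' := by
  obtain ⟨A, a, b, g, hA, hg, hab, hbm, hmeets⟩ := h
  exact ⟨A, a, b, g, hA, hg, le_trans (by gcongr) hab, hbm, hmeets⟩

theorem hasDenseSet_zero {m D : ℕ} (hD : D ≤ m) : HasDenseSet H m 0 D :=
  ⟨∅, 0, m, 1, rfl, one_pos, by simpa using hD, le_rfl, by simp⟩

theorem exists_coarser_scale {D g L : ℕ} (hD : 0 < D) (hg : 0 < g) (hL : g * (3 * D) ≤ L) :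
    ∃ g', g ≤ g' ∧ g' * D < L ∧ L ≤ 3 * D * g' := by
  have hgL : g ≤ L / (3 * D) := (Nat.le_div_iff_mul_le (by omega)).2 hL
  have hfloor : L / (3 * D) * (3 * D) ≤ L := Nat.div_mul_le_self L (3 * D)
  refine ⟨L / (3 * D) + 1, by omega, ?_, (Nat.lt_mul_div_succ L (by omega)).le⟩
  -- The factor `3` absorbs the rounding: `L / (3 * D) + 1` is at most `2 * L / (3 * D)`.
  nlinarith

theorem HasDenseSet.succ {m k s D : ℕ} (hD : 0 < D)
    (hpath : ∀ i, i + 1 < m → H.Adj i (i + 1))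
    (hno : ∀ f : pathGraph (k + 1) ↪g H, ¬ ∀ i, f i < m)
    (h : HasDenseSet H m s ((3 * D) ^ (k + 1))) : HasDenseSet H m (s + 1) D := by
  obtain ⟨A, a, b, g, hA, hg, hab, hbm, hmeets⟩ := h
  have hlong : a + g * (3 * D) * (3 * D) ^ k ≤ b := by rwa [mul_assoc, ← pow_succ']
  rcases exists_meetsWindows_or_inducedPath (by positivity) (by positivity) k
      (fun i _ hi => hpath i (by omega)) hlong with ⟨v, c, hav, hcb, hvc, hv⟩ | ⟨f, -, hf⟩
  · obtain ⟨g', hgg', hroom, hcover⟩ := exists_coarser_scale (L := c - v) hD hg (by omega)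
    have hvA : v ∉ A := fun hvA => absurd (hmeets v hvA).1 (by omega)
    refine ⟨A.cons v hvA, v + 1, c, g', by rw [Finset.card_cons, hA], by omega, by omega, by omega,
      ?_⟩
    simp only [Finset.mem_cons, forall_eq_or_imp]
    refine ⟨⟨v.lt_succ_self, hv g' (by omega)⟩, fun w hw => ⟨?_, ?_⟩⟩
    · have := (hmeets w hw).1
      omega
    · exact (hmeets w hw).2.mono (by omega) hcb hgg'
  · exact absurd (fun i => (hf i).2.trans_le hbm) (hno f)

theorem hasDenseSet_of_pow_le {m k : ℕ} (hpath : ∀ i, i + 1 < m → H.Adj i (i + 1))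
    (hno : ∀ f : pathGraph (k + 1) ↪g H, ¬ ∀ i, f i < m) (s : ℕ) {D : ℕ} (hD : 2 ≤ D)
    (hm : D ^ (3 * (k + 1)) ^ s ≤ m) : HasDenseSet H m s D := by
  induction s generalizing D with
  | zero => exact hasDenseSet_zero (by simpa using hm)
  | succ s ih =>
    have hD' : 2 ≤ D ^ (3 * (k + 1)) := hD.trans (Nat.le_self_pow (by omega) D)
    have hDpow : (3 * D) ^ (k + 1) ≤ D ^ (3 * (k + 1)) := by
      rw [pow_mul]
      gcongr
      calc 3 * D ≤ (D * D) * D := by gcongr; nlinarith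
        _ = D ^ 3 := by ring
    have hdense : HasDenseSet H m s (D ^ (3 * (k + 1))) :=
      ih hD' (by rwa [← pow_mul, ← pow_succ'])
    exact (hdense.mono hDpow).succ (by omega) hpath hno

end Density

section TopologicalMinor

variable {V W : Type*} {G : SimpleGraph V}

theorem walkInternal_reverse {u v : V} (q : G.Walk u v) :
    WalkInternal q.reverse = WalkInternal q := by
  ext z
  simp [WalkInternal, and_comm]

theorem exists_isPath_walkInternal_subset {S : Set V} (hS : (G.induce S).Preconnected)
    {u v x y : V} (hx : x ∈ S) (hux : G.Adj u x) (hy : y ∈ S) (hvy : G.Adj v y) :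
    ∃ q : G.Walk u v, q.IsPath ∧ WalkInternal q ⊆ S := by
  classical
  obtain ⟨q⟩ := hS ⟨x, hx⟩ ⟨y, hy⟩
  let q' : G.Walk x y := q.map (Embedding.induce S).toHom
  have hq' : ∀ z ∈ q'.support, z ∈ S := by
    intro z hz
    obtain ⟨z', -, rfl⟩ := List.mem_map.1 (q.support_map (Embedding.induce S).toHom ▸ hz)
    exact z'.2
  let r : G.Walk u v := .cons hux (q'.concat hvy.symm)
  refine ⟨r.bypass, r.bypass_isPath, fun z ⟨hz, hzu, hzv⟩ => hq' z ?_⟩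
  have hzr : z ∈ r.support := r.support_bypass_subset_support hz
  simpa [r, Walk.support_concat, hzu, hzv] using hzr

theorem isTopMinor_of_pairwiseDisjoint_preconnected (F : SimpleGraph W) (φ : W ↪ V)
    (S : Sym2 W → Set V) (hconn : ∀ e ∈ F.edgeSet, (G.induce (S e)).Preconnected)
    (hadj : ∀ e ∈ F.edgeSet, ∀ u ∈ e, ∃ x ∈ S e, G.Adj (φ u) x)
    (hbranch : ∀ e ∈ F.edgeSet, Disjoint (S e) (Set.range φ))
    (hdisj : F.edgeSet.PairwiseDisjoint S) : IsTopMinor F G := by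
  obtain ⟨_, -⟩ := exists_wellFoundedLT W
  have hlink : ∀ u v, F.Adj u v →
      ∃ q : G.Walk (φ u) (φ v), q.IsPath ∧ WalkInternal q ⊆ S s(u, v) := by
    intro u v h
    obtain ⟨x, hx, hux⟩ := hadj s(u, v) h u (Sym2.mem_mk_left u v)
    obtain ⟨y, hy, hvy⟩ := hadj s(u, v) h v (Sym2.mem_mk_right u v)
    exact exists_isPath_walkInternal_subset (hconn s(u, v) h) hx hux hy hvy
  choose q hq hqS using hlink
  -- Orienting each edge by a linear order makes the choice of links compatible with reversal.
  let P ⦃u v : W⦄ (h : F.Adj u v) : G.Walk (φ u) (φ v) :=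
    if u < v then q u v h else (q v u h.symm).reverse
  have hPS : ∀ ⦃u v⦄ (h : F.Adj u v), WalkInternal (P h) ⊆ S s(u, v) := by
    intro u v h
    by_cases huv : u < v
    · simpa only [P, if_pos huv] using hqS u v h
    · simpa only [P, if_neg huv, walkInternal_reverse, Sym2.eq_swap] using hqS v u h.symm
  refine ⟨φ, P, fun u v h => ?_, fun u v h => ?_, fun u v h z hz => ?_,
    fun u v u' v' h h' hne z hz => ?_⟩
  · by_cases huv : u < v
    · simpa only [P, if_pos huv] using hq u v h
    · simpa only [P, if_neg huv] using (hq v u h.symm).reverse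
  · rcases h.ne.lt_or_gt with huv | hvu
    · simp only [P, if_pos huv, if_neg huv.asymm]
    · simp only [P, if_pos hvu, if_neg hvu.asymm, Walk.reverse_reverse]
  · exact (hbranch s(u, v) h).notMem_of_mem_left (hPS h hz)
  · exact fun hz' => (hdisj h h' hne).notMem_of_mem_left (hPS h hz) (hPS h' hz')

theorem preconnected_induce_image_Ico {p : ℕ → V} {l r : ℕ}
    (hpath : ∀ i, l ≤ i → i + 1 < r → G.Adj (p i) (p (i + 1))) :
    (G.induce (p '' Set.Ico l r)).Preconnected := by
  let f : pathGraph (r - l) →g G.induce (p '' Set.Ico l r) :=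
    { toFun i := ⟨p (l + i), l + i, ⟨by omega, by omega⟩, rfl⟩
      map_rel' {i j} hij := by
        rw [pathGraph_adj] at hij
        rcases hij with hij | hij
        · simpa [← hij, ← add_assoc] using hpath (l + i) (by omega) (by omega)
        · simpa [← hij, ← add_assoc] using (hpath (l + j) (by omega) (by omega)).symm }
  refine (pathGraph_preconnected _).map f ?_
  rintro ⟨_, z, hz, rfl⟩
  exact ⟨⟨z - l, by have := hz.1; have := hz.2; omega⟩,
    Subtype.ext (congrArg p (Nat.add_sub_cancel' hz.1))⟩

theorem HasDenseSet.isTopMinor [Finite W] {p : ℕ → V} {m : ℕ} (hinj : Set.InjOn p (Set.Iio m))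
    (hpath : ∀ i, i + 1 < m → G.Adj (p i) (p (i + 1)))
    (h : HasDenseSet (G.comap p) m (Nat.card W) (Nat.card (Sym2 W))) (F : SimpleGraph W) :
    IsTopMinor F G := by
  obtain ⟨A, a, b, g, hA, -, hab, hbm, hmeets⟩ := h
  obtain ⟨σ⟩ : Nonempty (W ≃ A) := Finite.card_eq.1 (by simp [hA])
  let ι : Sym2 W ≃ Fin (Nat.card (Sym2 W)) := Finite.equivFin _
  let block (j : ℕ) : Set ℕ := Set.Ico (a + g * j) (a + g * (j + 1))
  have hmono : Monotone fun j => a + g * j := fun i j hij => by dsimp only; gcongr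
  have hbranch (u : W) : (σ u : ℕ) < a := (hmeets _ (σ u).2).1
  have hblock_le (e : Sym2 W) : a + g * (ι e + 1) ≤ b :=
    le_trans (by gcongr; omega) hab
  have hblock_lt (e : Sym2 W) : block (ι e) ⊆ Set.Iio m := fun z hz =>
    hz.2.trans_le ((hblock_le e).trans hbm)
  have hbranch_lt (u : W) : (σ u : ℕ) ∈ Set.Iio m := (hbranch u).trans_le (by omega)
  let φ : W ↪ V :=
    ⟨fun u => p (σ u), fun u v huv => σ.injective <| Subtype.ext <|
      hinj (hbranch_lt u) (hbranch_lt v) huv⟩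
  refine isTopMinor_of_pairwiseDisjoint_preconnected F φ (fun e => p '' block (ι e))
    (fun e _ => ?_) (fun e _ u _ => ?_) (fun e _ => ?_) fun e _ e' _ hne => ?_
  · exact preconnected_induce_image_Ico fun i _ hi =>
      hpath i (hi.trans_le ((hblock_le e).trans hbm))
  · obtain ⟨z, hz, hadj⟩ :=
      (hmeets _ (σ u).2).2 (a + g * ι e) (by omega)
        (by simpa only [mul_add_one, add_assoc] using hblock_le e)
    rw [add_assoc, ← mul_add_one] at hz
    exact ⟨p z, ⟨z, hz, rfl⟩, hadj⟩
  · rw [Set.disjoint_left]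
    rintro _ ⟨z, hz, rfl⟩ ⟨u, hu⟩
    have hzu : (σ u : ℕ) = z := hinj (hbranch_lt u) (hblock_lt e hz) hu
    exact absurd hz.1 (by have := hbranch u; omega)
  · have hdisj : Disjoint (block (ι e)) (block (ι e')) :=
      hmono.pairwise_disjoint_on_Ico_succ (Fin.val_injective.ne (ι.injective.ne hne))
    rw [Function.onFun, Set.disjoint_iff_inter_eq_empty,
      ← hinj.image_inter (hblock_lt e) (hblock_lt e'), hdisj.inter_eq, Set.image_empty]

end TopologicalMinor

section Bounds

variable {V W : Type*} {G : SimpleGraph V}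

theorem lt_pow_of_not_isTopMinor [Finite W] {F : SimpleGraph W} (hF : ¬ IsTopMinor F G) {m k : ℕ}
    (hpath : HasPathOfOrder G m) (hno : IsEmpty (pathGraph (k + 1) ↪g G)) :
    m < (Nat.card (Sym2 W) + 2) ^ (3 * (k + 1)) ^ Nat.card W := by
  obtain ⟨u, v, p, hp, rfl⟩ := hpath
  have hinj : Set.InjOn p.getVert (Set.Iio (p.length + 1)) :=
    hp.getVert_injOn.mono fun i hi => Nat.lt_succ_iff.1 hi
  have hadj : ∀ i, i + 1 < p.length + 1 → G.Adj (p.getVert i) (p.getVert (i + 1)) :=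
    fun i hi => p.adj_getVert_succ (by omega)
  have hno' : ∀ f : pathGraph (k + 1) ↪g G.comap p.getVert, ¬ ∀ i, f i < p.length + 1 :=
    fun f hf => hno.false
      ⟨⟨fun i => p.getVert (f i), fun i j hij => f.injective (hinj (hf i) (hf j) hij)⟩,
        f.map_rel_iff'⟩
  by_contra! hle
  have hdense := hasDenseSet_of_pow_le hadj hno' (Nat.card W) (by omega) hle
  exact hF ((hdense.mono (by omega)).isTopMinor hinj hadj F)

theorem logb_two_lt_of_lt_pow {m D n : ℕ} (hm : 0 < m) (h : m < D ^ n) :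
    logb 2 m < n * D := by
  have hpow : m < 2 ^ (n * D) :=
    calc m < D ^ n := h
      _ ≤ (2 ^ D) ^ n := by gcongr; exact Nat.lt_two_pow_self.le
      _ = 2 ^ (n * D) := by rw [← pow_mul, mul_comm]
  rw [logb_lt_iff_lt_rpow one_lt_two (by exact_mod_cast hm)]
  exact_mod_cast hpow

theorem pow_floor_mul_le_pow {r : ℝ} (hr : 2 ≤ r) (t D : ℕ) :
    (3 * (⌊r⌋₊ + 1) : ℝ) ^ t * D ≤ r ^ (4 * t + D) := by
  have hfloor : (⌊r⌋₊ : ℝ) ≤ r := Nat.floor_le (by linarith)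
  have hbase : (3 * (⌊r⌋₊ + 1) : ℝ) ≤ r ^ 4 := by
    have h8 : (2 : ℝ) ^ 3 ≤ r ^ 3 := by gcongr
    nlinarith
  have hD : (D : ℝ) ≤ r ^ D :=
    calc (D : ℝ) ≤ 2 ^ D := by exact_mod_cast Nat.lt_two_pow_self.le
      _ ≤ r ^ D := by gcongr
  calc (3 * (⌊r⌋₊ + 1) : ℝ) ^ t * D ≤ (r ^ 4) ^ t * r ^ D := by gcongr
    _ = r ^ (4 * t + D) := by rw [← pow_mul, ← pow_add]

theorem hasInducedPathGE_of_nonpos (G : SimpleGraph V) {r : ℝ} (hr : r ≤ 0) :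
    HasInducedPathGE G r :=
  ⟨0, by exact_mod_cast hr, ⟨RelEmbedding.ofIsEmpty _ _⟩⟩

theorem HasPathOfOrder.pos {m : ℕ} (hpath : HasPathOfOrder G m) : 0 < m := by
  obtain ⟨u, v, p, -, rfl⟩ := hpath
  exact p.length.succ_pos

theorem HasPathOfOrder.hasInducedPathGE_two {m : ℕ} (hpath : HasPathOfOrder G m) (hm : 2 ≤ m) :
    HasInducedPathGE G 2 := by
  obtain ⟨u, v, p, -, rfl⟩ := hpath
  have hadj : G.Adj (p.getVert 0) (p.getVert 1) := p.adj_getVert_succ (by omega)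
  exact ⟨2, by norm_num, ⟨consInducedPath (singletonInducedPath G (p.getVert 1)) (p.getVert 0)
    (fun _ => hadj.ne') fun i => iff_of_true hadj (Fin.fin_one_eq_zero i)⟩⟩

theorem HasInducedPathGE.mono {r s : ℝ} (h : HasInducedPathGE G s) (hrs : r ≤ s) :
    HasInducedPathGE G r :=
  let ⟨k, hk, f⟩ := h
  ⟨k, hrs.trans hk, f⟩

theorem hasInducedPathGE_of_pow_le_logb [Finite W] {F : SimpleGraph W} (hF : ¬ IsTopMinor F G)
    {m : ℕ} (hpath : HasPathOfOrder G m) {r : ℝ} (hr : 2 ≤ r)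
    (hrm : r ^ (4 * Nat.card W + (Nat.card (Sym2 W) + 2)) ≤ logb 2 m) :
    HasInducedPathGE G r := by
  by_contra hno
  have hempty : IsEmpty (pathGraph (⌊r⌋₊ + 1) ↪g G) := not_nonempty_iff.1 fun hf =>
    hno ⟨_, by exact_mod_cast (Nat.lt_floor_add_one r).le, hf⟩
  have hlog := logb_two_lt_of_lt_pow hpath.pos (lt_pow_of_not_isTopMinor hF hpath hempty)
  have hpow := pow_floor_mul_le_pow hr (Nat.card W) (Nat.card (Sym2 W) + 2)
  push_cast at hlog hpow
  exact absurd (hlog.trans_le (hpow.trans hrm)) (lt_irrefl _)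

end Bounds

theorem stmt3_general {W : Type*} [Finite W] (F : SimpleGraph W) :
    ∃ d : ℝ, 0 < d ∧ d < 1 ∧
      ∀ {V : Type*} (G : SimpleGraph V) (m : ℕ), ¬ IsTopMinor F G → HasPathOfOrder G m →
        HasInducedPathGE G (Real.logb 2 m ^ d) := by
  let C : ℕ := 4 * Nat.card W + (Nat.card (Sym2 W) + 2)
  have hC : (1 : ℝ) < C := by exact_mod_cast (by omega : 1 < C)
  refine ⟨(C : ℝ)⁻¹, by positivity, inv_lt_one_of_one_lt₀ hC, fun G m hF hpath => ?_⟩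
  obtain rfl | hm := eq_or_lt_of_le (Nat.one_le_of_lt hpath.pos)
  · have hlog : logb 2 (1 : ℕ) = 0 := by simp
    exact hasInducedPathGE_of_nonpos G (by rw [hlog, zero_rpow (by positivity)])
  rcases le_total (logb 2 m ^ (C : ℝ)⁻¹) 2 with hr | hr
  · exact (hpath.hasInducedPathGE_two hm).mono hr
  · have hlog : 0 ≤ logb 2 m := logb_nonneg one_lt_two (by exact_mod_cast hm.le)
    exact hasInducedPathGE_of_pow_le_logb hF hpath hr
      (rpow_inv_natCast_pow hlog (by omega)).le

theorem stmt3 (𝒢 : ∀ ⦃n : ℕ⦄, SimpleGraph (Fin n) → Prop)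
    (hclosed : ∀ {n m : ℕ} (G : SimpleGraph (Fin n)) (H : SimpleGraph (Fin m)),
      𝒢 G → IsTopMinor H G → 𝒢 H)
    (hnontrivial : ∃ (n : ℕ) (G : SimpleGraph (Fin n)), ¬ 𝒢 G) :
    ∃ d : ℝ, 0 < d ∧ d < 1 ∧
      ∀ {n : ℕ} (G : SimpleGraph (Fin n)) (m : ℕ), 𝒢 G → HasPathOfOrder G m →
        HasInducedPathGE G (Real.logb 2 m ^ d) := by
  obtain ⟨t, F, hF⟩ := hnontrivial
  obtain ⟨d, hd₀, hd₁, h⟩ := stmt3_general F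
  exact ⟨d, hd₀, hd₁, fun G m hG => h G m fun hFG => hF (hclosed G F hG hFG)⟩
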